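/- Let U ⊆ ℝᵐ be open, let λ : U → ℝ be smooth, and let f be a real polynomial with derivative f′. Define the matrix-valued map A : U → Mat_m(ℝ) by A(x) = f(J_m(λ(x))). Then for every column index i ∈ {1,…,m} and every x ∈ U: Σ_{s=1}^m ∂/∂x^s [A(x)]_{s,i} = Σ_{s=1}^m (∂λ/∂x^s)(x) · [f′(J_m(λ(x)))]_{s,i}. -/

import Mathlib

open scoped BigOperators

/-- Partial derivative of `f : ℝᵐ → ℝ` in the `s`-th coordinate direction. -/
noncomputable def pd {m : ℕ} (f : (Fin m → ℝ) → ℝ) (s : Fin m) (x : Fin m → ℝ) : ℝ :=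
  fderiv ℝ f x (Pi.single s 1)

/-- The `m × m` Jordan block with eigenvalue `lam`: `lam` on the diagonal,
`1` directly above the diagonal, `0` elsewhere. -/
def jordanBlock (m : ℕ) (lam : ℝ) : Matrix (Fin m) (Fin m) ℝ :=
  fun i j => if (j : ℕ) = i then lam else if (j : ℕ) = (i : ℕ) + 1 then 1 else 0

theorem hasDerivAt_jordanBlock_entry (m : ℕ) (t : ℝ) (k i : Fin m) :
    HasDerivAt (fun t => jordanBlock m t k i) ((1 : Matrix (Fin m) (Fin m) ℝ) k i) t := by
  unfold jordanBlock
  by_cases h : (i : ℕ) = k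
  · have h' : k = i := Fin.ext h.symm
    subst h'
    simp only [if_true, Matrix.one_apply_eq]
    exact hasDerivAt_id t
  · have h' : k ≠ i := fun e => h (by rw [e])
    simp only [h, if_false, Matrix.one_apply_ne h']
    exact hasDerivAt_const t _

theorem hasDerivAt_aeval_jordanBlock (m : ℕ) (f : Polynomial ℝ) (t : ℝ) :
    ∀ s i : Fin m, HasDerivAt (fun t => (Polynomial.aeval (jordanBlock m t) f) s i)
      ((Polynomial.aeval (jordanBlock m t) (Polynomial.derivative f)) s i) t := by
  induction f using Polynomial.induction_on with
  | C a =>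
    intro s i
    simp only [Polynomial.aeval_C, Polynomial.derivative_C, map_zero, Matrix.zero_apply]
    exact hasDerivAt_const t _
  | add p q hp hq =>
    intro s i
    simp only [map_add, Matrix.add_apply]
    exact (hp s i).add (hq s i)
  | monomial n a ih =>
    intro s i
    rw [pow_succ, ← mul_assoc]
    generalize Polynomial.C a * Polynomial.X ^ n = p at ih
    have h : Polynomial.aeval (jordanBlock m t) (Polynomial.derivative (p * Polynomial.X))
        = Polynomial.aeval (jordanBlock m t) (Polynomial.derivative p) * jordanBlock m t
          + Polynomial.aeval (jordanBlock m t) p * 1 := by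
      simp [Polynomial.derivative_mul]
    rw [h]
    simp only [map_mul, Polynomial.aeval_X, Matrix.add_apply, Matrix.mul_apply]
    rw [← Finset.sum_add_distrib]
    exact HasDerivAt.fun_sum fun k _ =>
      (ih s k).mul (hasDerivAt_jordanBlock_entry m t k i)

theorem divergence_poly_jordanBlock {m : ℕ} (U : Set (Fin m → ℝ)) (hU : IsOpen U)
    (lam : (Fin m → ℝ) → ℝ) (hlam : ContDiffOn ℝ (⊤ : ℕ∞) lam U)
    (f : Polynomial ℝ) :
    ∀ i : Fin m, ∀ x ∈ U,
      (∑ s : Fin m, pd (fun y => (Polynomial.aeval (jordanBlock m (lam y)) f) s i) s x)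
        = ∑ s : Fin m,
            pd lam s x *
              (Polynomial.aeval (jordanBlock m (lam x)) (Polynomial.derivative f)) s i := by
  intro i x hx
  have hd : DifferentiableAt ℝ lam x :=
    (hlam.contDiffAt (hU.mem_nhds hx)).differentiableAt (by simp)
  refine Finset.sum_congr rfl fun s _ => ?_
  have h := (hasDerivAt_aeval_jordanBlock m f (lam x) s i).comp_hasFDerivAt x hd.hasFDerivAt
  have h2 : fderiv ℝ (fun y => (Polynomial.aeval (jordanBlock m (lam y)) f) s i) x = _ := h.fderiv
  unfold pd
  rw [h2]
  simp [mul_comm]
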